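/- Let e ≥ 2, r = 4, with the matrices of the r = 4 family as defined below. Then, among the matrices α^1_f, α^2_g, α^3_h, β^{12}_{fg}, β^{13}_{fh}, β̄^{13}_{fh}, β^{23}_{gh}, γ^{123}_{fgh} (for 1 ≤ f ≤ y_1, 1 ≤ g ≤ y_2, 1 ≤ h ≤ y_3), exactly the following M satisfy that Pt(0,M) is Kleshchev: α^1_f with k_1 < i_f; α^2_g with i_1 < j_g and k_1 < j_g; α^3_h with i_1 < k_h; β^{12}_{fg} with k_1 < j_g < i_f, or with k_1 < j_g and i_f < j_g and f ≠ 1; β^{13}_{fh} with j_1 < i_f < k_h, or with k_h < i_f and h ≠ 1; β̄^{13}_{fh} with j_1 < k_h < i_f, or with i_f < k_h and f ≠ 1; β^{23}_{gh} with i_1 < j_g < k_h, or with i_1 < j_g and k_h < j_g and h ≠ 1; γ^{123}_{fgh} with (j_g < i_f and j_g < k_h and g ≠ 1), or (i_f < j_g < k_h and f ≠ 1), or (k_h < j_g < i_f and h ≠ 1), or (i_f < j_g and k_h < j_g and f ≠ 1 and h ≠ 1). -/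

import Mathlib

open scoped Classical

namespace AK
noncomputable section



/-! ### Matrices, order from base tuple, abacus β-sets -/

/-- The order ≺ on columns determined by a base tuple `B`. -/
def prec {e : ℕ} (B : Fin e → ℕ) (i j : Fin e) : Prop :=
  B i < B j ∨ (B i = B j ∧ i < j)

/-- `rank B i = π(B)⁻¹(i)`, the number of columns ≺-smaller than `i`. -/
def rank {e : ℕ} (B : Fin e → ℕ) (i : Fin e) : Fin e :=
  ⟨(Finset.univ.filter (fun j => prec B j i)).card, by
    have h1 : (Finset.univ.filter (fun j => prec B j i)) ⊆ Finset.univ.erase i := by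
      intro j hj
      rw [Finset.mem_filter] at hj
      refine Finset.mem_erase.mpr ⟨?_, Finset.mem_univ j⟩
      rintro rfl
      rcases hj.2 with h | ⟨-, h⟩ <;> exact lt_irrefl _ h
    have h2 := Finset.card_le_card h1
    have h3 : (Finset.univ.erase i).card < Finset.univ.card :=
      Finset.card_erase_lt_of_mem (Finset.mem_univ i)
    simpa using lt_of_le_of_lt h2 h3⟩

/-- The number of beads on runner `i` of the abacus of component `s` of `Pt(B,M)`. -/
def beads {e r : ℕ} (B : Fin e → ℕ) (M : Fin r → Fin e → Bool) (s : Fin r) (i : Fin e) : ℕ :=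
  B i + (if M s (rank B i) then 1 else 0)

/-- The canonical β-set of component `s` of `Pt(B,M)`. -/
def Tset {e r : ℕ} (B : Fin e → ℕ) (M : Fin r → Fin e → Bool) (s : Fin r) : Set ℤ :=
  {z | z < 0 ∨ (0 ≤ z ∧ ∃ h : z.toNat % e < e, z.toNat / e < beads B M s ⟨z.toNat % e, h⟩)}

/-- `n_s`, the total number of beads of component `s`. -/
def nsum {e r : ℕ} (B : Fin e → ℕ) (M : Fin r → Fin e → Bool) (s : Fin r) : ℕ :=
  ∑ i : Fin e, beads B M s i

/-- Decreasing enumeration of a set of integers: `tEnum T x` is `t_{x+1}`. -/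
noncomputable def tEnum (T : Set ℤ) : ℕ → ℤ
  | 0 => sSup T
  | (x + 1) => sSup (T ∩ Set.Iio (tEnum T x))

/-- The multipartition `Pt(B,M)`: component `s`, part `p+1` (0-indexed parts). -/
noncomputable def PtPart {e r : ℕ} (B : Fin e → ℕ) (M : Fin r → Fin e → Bool)
    (s : Fin r) (p : ℕ) : ℕ :=
  (tEnum (Tset B M s) p + (p + 1) - (nsum B M s : ℤ)).toNat

/-- The multicharge of `Pt(B,M)`. -/
noncomputable def PtCharge {e r : ℕ} (B : Fin e → ℕ) (M : Fin r → Fin e → Bool)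
    (s : Fin r) : ZMod e :=
  (nsum B M s : ZMod e)

/-! ### Nodes, good nodes and Kleshchev multipartitions -/

/-- A node `(s, x, y)` (all 0-indexed). -/
abbrev Node (r : ℕ) := Fin r × ℕ × ℕ

/-- `A` is above `B`. -/
def NodeAbove {r : ℕ} (A B : Node r) : Prop :=
  A.1 < B.1 ∨ (A.1 = B.1 ∧ A.2.1 < B.2.1)

/-- The residue of a node. -/
def res {e r : ℕ} (a : Fin r → ZMod e) (A : Node r) : ZMod e :=
  a A.1 - (A.2.1 : ZMod e) + (A.2.2 : ZMod e)

/-- `A` is a removable node of `lam`. -/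
def Removable {r : ℕ} (lam : Fin r → ℕ → ℕ) (A : Node r) : Prop :=
  A.2.2 + 1 = lam A.1 A.2.1 ∧ lam A.1 (A.2.1 + 1) < lam A.1 A.2.1

/-- `A` is an addable node of `lam`. -/
def Addable {r : ℕ} (lam : Fin r → ℕ → ℕ) (A : Node r) : Prop :=
  A.2.2 = lam A.1 A.2.1 ∧ (A.2.1 = 0 ∨ lam A.1 A.2.1 < lam A.1 (A.2.1 - 1))

/-- `A` is a normal node of `lam`. -/
def Normal {e r : ℕ} (a : Fin r → ZMod e) (lam : Fin r → ℕ → ℕ) (A : Node r) : Prop :=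
  Removable lam A ∧
    ∀ B : Node r, Addable lam B → res a B = res a A → NodeAbove A B →
      Set.ncard {C : Node r | Addable lam C ∧ res a C = res a A ∧ NodeAbove A C ∧ NodeAbove C B}
        < Set.ncard {C : Node r | Removable lam C ∧ res a C = res a A ∧ NodeAbove A C ∧ NodeAbove C B}

/-- `A` is a good node of `lam`: normal, and highest among normal nodes of its residue. -/
def Good {e r : ℕ} (a : Fin r → ZMod e) (lam : Fin r → ℕ → ℕ) (A : Node r) : Prop :=
  Normal a lam A ∧ ∀ B : Node r, Normal a lam B → res a B = res a A → B ≠ A → NodeAbove A B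

/-- Remove the node `A` from `lam`. -/
def removeNode {r : ℕ} (lam : Fin r → ℕ → ℕ) (A : Node r) : Fin r → ℕ → ℕ :=
  fun s x => if s = A.1 ∧ x = A.2.1 then lam s x - 1 else lam s x

/-- Kleshchev multipartitions (for the multicharge `a`). -/
inductive IsKleshchev {e r : ℕ} (a : Fin r → ZMod e) : (Fin r → ℕ → ℕ) → Prop
  | empty : IsKleshchev a (fun _ _ => 0)
  | step (lam : Fin r → ℕ → ℕ) (A : Node r) (hA : Good a lam A)
      (h : IsKleshchev a (removeNode lam A)) : IsKleshchev a lam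

/-! ### Weights and bead swaps -/

/-- `δ₊^M(t,s)`. -/
def deltaP {e r : ℕ} (M : Fin r → Fin e → Bool) (t s : Fin r) : ℕ :=
  (Finset.univ.filter (fun i => M t i = true ∧ M s i = false)).card

/-- `wt^M(t,s)`. -/
def wtPair {e r : ℕ} (M : Fin r → Fin e → Bool) (t s : Fin r) : ℕ :=
  min (deltaP M t s) (deltaP M s t)

/-- `wt(M)`. -/
def wtM {e r : ℕ} (M : Fin r → Fin e → Bool) : ℕ :=
  ∑ t : Fin r, ∑ s ∈ Finset.univ.filter (· < t), wtPair M t s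

/-- `M'` is obtained from `M` by a bead swap. -/
def BeadSwap {e r : ℕ} (M M' : Fin r → Fin e → Bool) : Prop :=
  ∃ i j : Fin e, i ≠ j ∧ ∃ s t : Fin r, s ≠ t ∧
    M s i = true ∧ M t j = true ∧ M s j = false ∧ M t i = false ∧
    M' s i = false ∧ M' t j = false ∧ M' s j = true ∧ M' t i = true ∧
    (∀ s' i', (s' ≠ s ∧ s' ≠ t) ∨ (i' ≠ i ∧ i' ≠ j) → M' s' i' = M s' i')


/-! ### The `r = 4` family -/

variable {e : ℕ}

/-- Default columns: `Y_0 ↦ I(0)`, `Y_1 ↦ I(1)`, `Y_2 ↦ I(2)`, `Y_3 ↦ I(3)`. -/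
def base4 (Y1 Y2 Y3 : Finset (Fin e)) : Fin 4 → Fin e → Bool :=
  fun s c =>
    if c ∈ Y1 then decide (s.1 < 1)
    else if c ∈ Y2 then decide (s.1 < 2)
    else if c ∈ Y3 then decide (s.1 < 3)
    else false

/-- Overwrite column `c0` by the vector `v`. -/
def over1 (c0 : Fin e) (v : Fin 4 → Bool) (Mb : Fin 4 → Fin e → Bool) :
    Fin 4 → Fin e → Bool :=
  fun s c => if c = c0 then v s else Mb s c

section r4defs

variable (Y1 Y2 Y3 : Finset (Fin e)) {y1 y2 y3 : ℕ}
variable (h1 : Y1.card = y1) (h2 : Y2.card = y2) (h3 : Y3.card = y3)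

/-- `α^1_f`. -/
def alpha1 (f : Fin y1) : Fin 4 → Fin e → Bool :=
  over1 (Y1.orderEmbOfFin h1 f) ![false, false, false, true] (base4 Y1 Y2 Y3)

/-- `α^2_g`. -/
def alpha2 (g : Fin y2) : Fin 4 → Fin e → Bool :=
  over1 (Y2.orderEmbOfFin h2 g) ![false, true, false, true] (base4 Y1 Y2 Y3)

/-- `α^3_h`. -/
def alpha3 (h : Fin y3) : Fin 4 → Fin e → Bool :=
  over1 (Y3.orderEmbOfFin h3 h) ![false, true, true, true] (base4 Y1 Y2 Y3)

/-- `β^{12}_{fg}`. -/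
def beta12 (f : Fin y1) (g : Fin y2) : Fin 4 → Fin e → Bool :=
  over1 (Y1.orderEmbOfFin h1 f) ![false, true, false, false]
    (over1 (Y2.orderEmbOfFin h2 g) ![true, false, false, true] (base4 Y1 Y2 Y3))

/-- `β^{13}_{fh}`. -/
def beta13 (f : Fin y1) (h : Fin y3) : Fin 4 → Fin e → Bool :=
  over1 (Y1.orderEmbOfFin h1 f) ![false, false, true, false]
    (over1 (Y3.orderEmbOfFin h3 h) ![true, true, false, true] (base4 Y1 Y2 Y3))

/-- `β̄^{13}_{fh}`. -/
def beta13bar (f : Fin y1) (h : Fin y3) : Fin 4 → Fin e → Bool :=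
  over1 (Y1.orderEmbOfFin h1 f) ![false, true, false, false]
    (over1 (Y3.orderEmbOfFin h3 h) ![true, false, true, true] (base4 Y1 Y2 Y3))

/-- `β^{23}_{gh}`. -/
def beta23 (g : Fin y2) (h : Fin y3) : Fin 4 → Fin e → Bool :=
  over1 (Y2.orderEmbOfFin h2 g) ![false, true, true, false]
    (over1 (Y3.orderEmbOfFin h3 h) ![true, true, false, true] (base4 Y1 Y2 Y3))

/-- `γ^{123}_{fgh}`. -/
def gamma123 (f : Fin y1) (g : Fin y2) (h : Fin y3) : Fin 4 → Fin e → Bool :=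
  over1 (Y1.orderEmbOfFin h1 f) ![false, true, false, false]
    (over1 (Y2.orderEmbOfFin h2 g) ![true, false, true, false]
      (over1 (Y3.orderEmbOfFin h3 h) ![true, true, false, true] (base4 Y1 Y2 Y3)))

end r4defs

/-!
A multipartition with weakly decreasing bead counts and all contents in `[0, e]` is Kleshchev if and
only if consecutive components, aligned by content, are semistandard. Indeed residues then
determine contents, up to confusing the addable contents `0` and `e`, so a component carries at most
one removable node of a given residue and never an addable one beside it; hence removing a good node
both preserves and reflects semistandardness, and a nonempty semistandard multipartition always has
a good node. On β-sets, semistandardness says that below every position row `s + 1` of `M` has at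
most as many beads as row `s`. In the `r = 4` family each row gains at most one column over the
preceding row, so the condition becomes: every gained column is preceded by a lost one.
-/

section Boxed

variable {r : ℕ} {n : Fin r → ℕ} {lam : Fin r → ℕ → ℕ} {A B : Node r}

/-- The integral content of a node for the integral multicharge `n`; it lifts the residue. -/
def content (n : Fin r → ℕ) (A : Node r) : ℤ := n A.1 - A.2.1 + A.2.2

/-- The multicharge in `ℤ/e` of the integral multicharge `n`. -/
def multicharge (e : ℕ) (n : Fin r → ℕ) : Fin r → ZMod e := fun s => n s

/-- Component `s` of `lam` is a partition contained in the `n s × (e - n s)` rectangle; this is the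
shape of a component of `Pt(0,M)` with `n s` beads among the positions `0, …, e - 1`. -/
structure IsBoxed (e : ℕ) (n : Fin r → ℕ) (lam : Fin r → ℕ → ℕ) : Prop where
  antitone (s : Fin r) : Antitone (lam s)
  zero_add_le (s : Fin r) : lam s 0 + n s ≤ e
  apply_eq_zero (s : Fin r) : lam s (n s) = 0

/-- Semistandardness of a multipartition with integral multicharge `n`: a row of a component is at
most as long as the row of the next component whose first node has the same content. -/
def IsSemistandard (n : Fin r → ℕ) (lam : Fin r → ℕ → ℕ) : Prop :=
  ∀ ⦃s t⦄, s ⋖ t → ∀ x y, x + n t = y + n s → lam s x ≤ lam t y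

theorem res_multicharge (n : Fin r → ℕ) (A : Node r) :
    res (multicharge e n) A = (content n A : ZMod e) := by
  simp [res, multicharge, content]

theorem Removable.eq_of_content_eq (hlam : Antitone (lam A.1)) (hA : Removable lam A)
    (hB : Removable lam B) (hs : A.1 = B.1) (hc : content n A = content n B) : A = B := by
  obtain ⟨s, x, y⟩ := A
  obtain ⟨t, x', y'⟩ := B
  obtain rfl : s = t := hs
  simp only [Removable, content] at hA hB hc hlam
  obtain rfl : x = x' := by
    rcases lt_trichotomy x x' with h | h | h
    · have := hlam (show x + 1 ≤ x' from h)
      omega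
    · exact h
    · have := hlam (show x' + 1 ≤ x from h)
      omega
  obtain rfl : y = y' := by omega
  rfl

theorem Removable.content_ne_of_addable (hlam : Antitone (lam A.1)) (hA : Removable lam A)
    (hB : Addable lam B) (hs : A.1 = B.1) : content n A ≠ content n B := by
  obtain ⟨s, x, y⟩ := A
  obtain ⟨t, x', y'⟩ := B
  obtain rfl : s = t := hs
  simp only [Removable, Addable, content] at hA hB hlam ⊢
  rcases lt_or_ge x x' with h | h
  · have := hlam (show x + 1 ≤ x' from h)
    omega
  · have := hlam h
    omega

theorem content_eq_of_res_eq (hA : content n A ∈ Set.Ioo (0 : ℤ) e)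
    (hB : content n B ∈ Set.Icc (0 : ℤ) e)
    (h : res (multicharge e n) B = res (multicharge e n) A) : content n B = content n A := by
  rw [res_multicharge, res_multicharge, ZMod.intCast_eq_intCast_iff_dvd_sub] at h
  obtain ⟨hA₀, hAe⟩ := hA
  obtain ⟨hB₀, hBe⟩ := hB
  have := Int.eq_zero_of_abs_lt_dvd h (by rw [abs_lt]; constructor <;> omega)
  omega

namespace IsBoxed

theorem content_mem_Ioo (h : IsBoxed e n lam) (hA : Removable lam A) :
    content n A ∈ Set.Ioo (0 : ℤ) e := by
  obtain ⟨s, x, y⟩ := A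
  have hx : x < n s := by
    by_contra! hx
    have := h.antitone s hx
    have := h.apply_eq_zero s
    simp only [Removable] at hA
    omega
  have := h.antitone s (Nat.zero_le x)
  have := h.zero_add_le s
  simp only [Removable, content, Set.mem_Ioo] at hA ⊢
  omega

theorem content_mem_Icc (h : IsBoxed e n lam) (hA : Addable lam A) :
    content n A ∈ Set.Icc (0 : ℤ) e := by
  obtain ⟨s, x, y⟩ := A
  have hx : x ≤ n s := by
    by_contra! hx
    have := h.antitone s (Nat.le_sub_one_of_lt hx)
    have := h.apply_eq_zero s
    simp only [Addable] at hA
    omega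
  have := h.antitone s (Nat.zero_le x)
  have := h.zero_add_le s
  simp only [Addable, content, Set.mem_Icc] at hA ⊢
  omega

theorem content_eq_of_removable (h : IsBoxed e n lam) (hA : Removable lam A)
    (hB : Removable lam B) (hr : res (multicharge e n) B = res (multicharge e n) A) :
    content n B = content n A :=
  content_eq_of_res_eq (h.content_mem_Ioo hA) (Set.Ioo_subset_Icc_self (h.content_mem_Ioo hB)) hr

theorem content_eq_of_addable (h : IsBoxed e n lam) (hA : Removable lam A) (hB : Addable lam B)
    (hr : res (multicharge e n) B = res (multicharge e n) A) : content n B = content n A :=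
  content_eq_of_res_eq (h.content_mem_Ioo hA) (h.content_mem_Icc hB) hr

theorem eq_of_removable (h : IsBoxed e n lam) (hA : Removable lam A) (hB : Removable lam B)
    (hr : res (multicharge e n) B = res (multicharge e n) A) (hs : A.1 = B.1) : A = B :=
  hA.eq_of_content_eq (h.antitone _) hB hs (h.content_eq_of_removable hA hB hr).symm

theorem fst_lt_of_nodeAbove_removable (h : IsBoxed e n lam) (hA : Removable lam A)
    (hB : Removable lam B) (hr : res (multicharge e n) B = res (multicharge e n) A)
    (hAB : NodeAbove A B) : A.1 < B.1 := by
  obtain hlt | ⟨hs, hx⟩ := hAB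
  · exact hlt
  · cases h.eq_of_removable hA hB hr hs
    exact absurd hx (lt_irrefl _)

theorem fst_lt_of_nodeAbove_addable (h : IsBoxed e n lam) (hA : Removable lam A)
    (hB : Addable lam B) (hr : res (multicharge e n) B = res (multicharge e n) A)
    (hAB : NodeAbove A B) : A.1 < B.1 :=
  hAB.resolve_right fun hs => hA.content_ne_of_addable (h.antitone _) hB hs.1
    (h.content_eq_of_addable hA hB hr).symm

theorem finite_removable (h : IsBoxed e n lam) (ρ : ZMod e) :
    {C | Removable lam C ∧ res (multicharge e n) C = ρ}.Finite :=
  Set.Finite.of_injOn (f := Prod.fst) (Set.mapsTo_univ _ _)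
    (fun _ hA _ hB hs => h.eq_of_removable hA.1 hB.1 (hB.2.trans hA.2.symm) hs) Set.finite_univ

/-- Two consecutive components leave no room for removable nodes strictly in between. -/
theorem not_covBy_of_normal (h : IsBoxed e n lam) (hA : Normal (multicharge e n) lam A)
    (hB : Addable lam B) (hr : res (multicharge e n) B = res (multicharge e n) A) :
    ¬ A.1 ⋖ B.1 := by
  intro hAB
  have hlt := hA.2 B hB hr (.inl hAB.lt)
  have hempty : {C : Node r | Removable lam C ∧ res (multicharge e n) C = res (multicharge e n) A ∧
      NodeAbove A C ∧ NodeAbove C B} = ∅ := by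
    refine Set.eq_empty_iff_forall_notMem.2 fun C ⟨hC, hrC, hAC, hCB⟩ => ?_
    have hltC := h.fst_lt_of_nodeAbove_removable hA.1 hC hrC hAC
    exact hAB.2 hltC (h.fst_lt_of_nodeAbove_addable hC hB (hr.trans hrC.symm) hCB)
  simp [hempty] at hlt

/-- Moving up to the adjacent component meets no new addable node, as `A` and `A'` themselves
rule out addable nodes of that residue in their components. -/
theorem normal_of_covBy (h : IsBoxed e n lam) {A' : Node r}
    (hA : Normal (multicharge e n) lam A) (hA' : Removable lam A')
    (hr : res (multicharge e n) A' = res (multicharge e n) A) (hcov : A'.1 ⋖ A.1) :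
    Normal (multicharge e n) lam A' := by
  have habove {C : Node r} (hC : Addable lam C)
      (hrC : res (multicharge e n) C = res (multicharge e n) A) (hA'C : NodeAbove A' C) :
      NodeAbove A C := by
    have hle : A.1 ≤ C.1 :=
      hcov.ge_of_gt (h.fst_lt_of_nodeAbove_addable hA' hC (hrC.trans hr.symm) hA'C)
    refine .inl (hle.lt_of_ne fun hs => ?_)
    exact hA.1.content_ne_of_addable (h.antitone _) hC hs (h.content_eq_of_addable hA.1 hC hrC).symm
  have habove' {C : Node r} (hAC : NodeAbove A C) : NodeAbove A' C :=
    .inl (hAC.elim hcov.lt.trans fun hs => hs.1 ▸ hcov.lt)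
  refine ⟨hA', fun B hB hrB hA'B => ?_⟩
  simp only [hr] at hrB ⊢
  calc Set.ncard {C | Addable lam C ∧ res (multicharge e n) C = res (multicharge e n) A ∧
        NodeAbove A' C ∧ NodeAbove C B}
      = Set.ncard {C | Addable lam C ∧ res (multicharge e n) C = res (multicharge e n) A ∧
        NodeAbove A C ∧ NodeAbove C B} := by
        congr 1 with C
        exact ⟨fun ⟨hC, hrC, hA'C, hCB⟩ => ⟨hC, hrC, habove hC hrC hA'C, hCB⟩,
          fun ⟨hC, hrC, hAC, hCB⟩ => ⟨hC, hrC, habove' hAC, hCB⟩⟩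
    _ < Set.ncard {C | Removable lam C ∧ res (multicharge e n) C = res (multicharge e n) A ∧
        NodeAbove A C ∧ NodeAbove C B} := hA.2 B hB hrB (habove hB hrB hA'B)
    _ ≤ Set.ncard {C | Removable lam C ∧ res (multicharge e n) C = res (multicharge e n) A ∧
        NodeAbove A' C ∧ NodeAbove C B} :=
        Set.ncard_le_ncard (fun C ⟨hC, hrC, hAC, hCB⟩ => ⟨hC, hrC, habove' hAC, hCB⟩)
          ((h.finite_removable _).subset fun C hC => ⟨hC.1, hC.2.1⟩)

theorem not_covBy_of_good (h : IsBoxed e n lam) {A' : Node r}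
    (hA : Good (multicharge e n) lam A) (hA' : Removable lam A')
    (hr : res (multicharge e n) A' = res (multicharge e n) A) : ¬ A'.1 ⋖ A.1 := by
  intro hcov
  have hAA' := hA.2 A' (h.normal_of_covBy hA.1 hA' hr hcov) hr fun heq => hcov.lt.ne (by rw [heq])
  exact hAA'.elim hcov.lt.asymm fun hs => hcov.lt.ne' hs.1

protected theorem removeNode (h : IsBoxed e n lam) (hA : Removable lam A) :
    IsBoxed e n (removeNode lam A) := by
  obtain ⟨s, x, y⟩ := A
  simp only [Removable] at hA
  refine ⟨fun t => antitone_nat_of_succ_le fun p => ?_, fun t => ?_, fun t => ?_⟩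
  · have := h.antitone t p.le_succ
    simp only [removeNode]
    grind
  · have := h.zero_add_le t
    simp only [removeNode]
    split_ifs <;> omega
  · have := h.apply_eq_zero t
    simp only [removeNode]
    split_ifs <;> omega

/-- Removable nodes of equal residue lie in distinct components, so the normal node in the first
possible component is good. -/
theorem exists_good_of_normal (h : IsBoxed e n lam) (hA : Normal (multicharge e n) lam A) :
    ∃ B, Good (multicharge e n) lam B := by
  let normals : Set (Node r) :=
    {B | Normal (multicharge e n) lam B ∧ res (multicharge e n) B = res (multicharge e n) A}
  have hfin : normals.Finite := (h.finite_removable _).subset fun B hB => ⟨hB.1.1, hB.2⟩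
  obtain ⟨B, ⟨hB, hrB⟩, hmin⟩ := hfin.exists_minimalFor Prod.fst normals ⟨A, hA, rfl⟩
  refine ⟨B, hB, fun C hC hrC hne => .inl (lt_of_not_ge fun hle => ?_)⟩
  refine hne (h.eq_of_removable hC.1 hB.1 hrC.symm ?_)
  exact hle.antisymm (hmin ⟨hC, hrC.trans hrB⟩ hle)

end IsBoxed

protected theorem IsSemistandard.removeNode (hlam : IsSemistandard n lam) (h : IsBoxed e n lam)
    (hA : Good (multicharge e n) lam A) : IsSemistandard n (removeNode lam A) := by
  intro s t hst x y hxy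
  have hle := hlam hst x y hxy
  have hle' := hlam hst (x + 1) (y + 1) (by omega)
  obtain ⟨s₀, x₀, y₀⟩ := A
  have hrem := hA.1.1
  simp only [Removable] at hrem
  by_cases hty : t = s₀ ∧ y = x₀
  · obtain ⟨rfl, rfl⟩ := hty
    have hlt : lam s x < lam t y := by
      by_contra! hge
      refine h.not_covBy_of_good hA (A' := (s, x, y₀)) ⟨?_, ?_⟩ ?_ hst
      · simp only
        omega
      · simp only
        omega
      · rw [res_multicharge, res_multicharge]
        congr 1
        simp only [content]
        omega
    simp only [removeNode, hst.ne, false_and, if_false, and_self, if_true]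
    omega
  · simp only [removeNode, hty, if_false]
    split_ifs <;> omega

theorem IsSemistandard.of_removeNode (hn : Antitone n) (h : IsBoxed e n lam)
    (hA : Normal (multicharge e n) lam A) (hlam : IsSemistandard n (removeNode lam A)) :
    IsSemistandard n lam := by
  intro s t hst x y hxy
  have hle := hlam hst x y hxy
  obtain ⟨s₀, x₀, y₀⟩ := A
  have hrem := hA.1
  simp only [Removable] at hrem
  by_cases hsx : s = s₀ ∧ x = x₀
  · obtain ⟨rfl, rfl⟩ := hsx
    simp only [removeNode, hst.ne', false_and, if_false, and_self, if_true] at hle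
    by_contra! hlt
    refine h.not_covBy_of_normal hA (B := (t, y, y₀)) ⟨?_, ?_⟩ ?_ hst
    · simp only
      omega
    · rcases y.eq_zero_or_pos with hy | hy
      · exact .inl hy
      · have := hn hst.le
        have hle' := hlam hst (x - 1) (y - 1) (by omega)
        have hx : x - 1 ≠ x := by omega
        have := h.antitone s (Nat.sub_le x 1)
        simp only [removeNode, hst.ne', hx, false_and, and_false, if_false] at hle'
        exact .inr (by simp only; omega)
    · rw [res_multicharge, res_multicharge]
      congr 1
      simp only [content]
      omega
  · simp only [removeNode, hsx, if_false] at hle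
    split_ifs at hle <;> omega

/-- The last row of the lowest nonempty component ends in a normal node, since no addable node below
it has its residue. -/
theorem IsSemistandard.exists_normal (hlam : IsSemistandard n lam) (hn : Antitone n)
    (h : IsBoxed e n lam) (hne : lam ≠ fun _ _ => 0) :
    ∃ A, Normal (multicharge e n) lam A := by
  have hnonempty : ∃ s, lam s 0 ≠ 0 := by
    by_contra! hzero
    refine hne (funext₂ fun s x => Nat.le_zero.1 ?_)
    exact hzero s ▸ h.antitone s x.zero_le
  obtain ⟨s, hs, hmax⟩ := Set.Finite.exists_maximal (Set.toFinite {s | lam s 0 ≠ 0}) hnonempty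
  have hbelow {t : Fin r} (hst : s < t) : lam t 0 = 0 :=
    not_not.1 fun ht => hst.not_ge (hmax ht hst.le)
  obtain ⟨x, hx, hx'⟩ : ∃ x, lam s x ≠ 0 ∧ lam s (x + 1) = 0 :=
    Nat.exists_not_and_succ_of_not_zero_of_exists hs ⟨n s, h.apply_eq_zero s⟩
  have hA : Removable lam (s, x, lam s x - 1) := ⟨by simp only; omega, by simp only; omega⟩
  refine ⟨_, hA, fun B hB hr hAB => absurd (h.content_eq_of_addable hA hB hr) ?_⟩
  have hsB : s < B.1 := h.fst_lt_of_nodeAbove_addable hA hB hr hAB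
  obtain ⟨u, hsu, huB⟩ := exists_covBy_le_of_lt hsB
  have hxu : x + n u < n s := by
    by_contra! hxu
    have := hn hsu.le
    have := hlam hsu (n s - n u) 0 (by omega)
    have := h.antitone s (show n s - n u ≤ x by omega)
    have := hbelow hsu.lt
    omega
  have hBu := hn huB
  have hB0 := hbelow hsB
  have := h.antitone B.1 (Nat.zero_le (B.2.1 - 1))
  have := h.antitone B.1 (Nat.zero_le B.2.1)
  simp only [Addable, content] at hB ⊢
  omega

/-- The number of nodes of a multipartition whose component `s` has at most `n s` rows. -/
def size (n : Fin r → ℕ) (lam : Fin r → ℕ → ℕ) : ℕ := ∑ s, ∑ x ∈ Finset.range (n s), lam s x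

theorem IsBoxed.size_removeNode_lt (h : IsBoxed e n lam) (hA : Removable lam A) :
    size n (removeNode lam A) < size n lam := by
  have hle (s : Fin r) (x : ℕ) : removeNode lam A s x ≤ lam s x := by
    simp only [removeNode]
    split_ifs <;> omega
  have hlt : removeNode lam A A.1 A.2.1 < lam A.1 A.2.1 := by
    have := hA.1
    simp only [removeNode, and_self, if_true]
    omega
  have hrow : A.2.1 < n A.1 := by
    by_contra! hrow
    have := h.antitone A.1 hrow
    have := h.apply_eq_zero A.1
    have := hA.2
    omega
  exact Finset.sum_lt_sum (fun s _ => Finset.sum_le_sum fun x _ => hle s x)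
    ⟨A.1, Finset.mem_univ _, Finset.sum_lt_sum (fun x _ => hle _ x)
      ⟨A.2.1, Finset.mem_range.2 hrow, hlt⟩⟩

theorem IsKleshchev.isSemistandard (hn : Antitone n)
    (hlam : IsKleshchev (multicharge e n) lam) (h : IsBoxed e n lam) : IsSemistandard n lam := by
  induction hlam with
  | empty => exact fun _ _ _ _ _ _ => le_rfl
  | step lam A hA _ ih => exact (ih (h.removeNode hA.1.1)).of_removeNode hn h hA.1

theorem IsSemistandard.isKleshchev (hlam : IsSemistandard n lam) (hn : Antitone n)
    (h : IsBoxed e n lam) : IsKleshchev (multicharge e n) lam := by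
  induction hk : size n lam using Nat.strong_induction_on generalizing lam with
  | _ k ih =>
    by_cases hne : lam = fun _ _ => 0
    · exact hne ▸ .empty
    · obtain ⟨A, hA⟩ := hlam.exists_normal hn h hne
      obtain ⟨B, hB⟩ := h.exists_good_of_normal hA
      exact .step lam B hB (ih _ (hk ▸ h.size_removeNode_lt hB.1.1) (hlam.removeNode h hB)
        (h.removeNode hB.1.1) rfl)

theorem isKleshchev_iff_isSemistandard (hn : Antitone n) (h : IsBoxed e n lam) :
    IsKleshchev (multicharge e n) lam ↔ IsSemistandard n lam :=
  ⟨fun hlam => hlam.isSemistandard hn h, fun hlam => hlam.isKleshchev hn h⟩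

end Boxed

section BetaSet

variable {S T : Finset (Fin e)} {b m z : ℤ} {p : ℕ}

/-- The β-set with the beads `S` at nonnegative positions and every negative position occupied. -/
def betaSet (S : Finset (Fin e)) : Set ℤ := {z | z < 0 ∨ ∃ i ∈ S, (i : ℤ) = z}

/-- The beads among `S` at positions below `z`. -/
def below (S : Finset (Fin e)) (z : ℤ) : Finset (Fin e) := {i ∈ S | (i : ℤ) < z}

/-- The number of beads of `betaSet S` strictly below `z`, normalised to vanish at `z = 0`, so that
negative positions count negatively. -/
def beadsBelow (S : Finset (Fin e)) (z : ℤ) : ℤ := min z 0 + (below S z).card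

theorem mem_below {i : Fin e} : i ∈ below S z ↔ i ∈ S ∧ (i : ℤ) < z := Finset.mem_filter

theorem below_of_nonpos (S : Finset (Fin e)) (hz : z ≤ 0) : below S z = ∅ :=
  Finset.filter_eq_empty_iff.2 fun i _ => by omega

theorem below_natCast (S : Finset (Fin e)) : below S e = S :=
  Finset.filter_true_of_mem fun i _ => by omega

theorem below_natCast_add_one {i : Fin e} (hi : i ∈ S) :
    below S (i + 1) = insert i (below S i) := by
  ext j
  simp only [Finset.mem_insert, mem_below, Fin.ext_iff, Int.lt_add_one_iff]
  grind

theorem below_add_one_of_forall_ne (hz : ∀ i ∈ S, (i : ℤ) ≠ z) :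
    below S (z + 1) = below S z :=
  Finset.filter_congr fun i hi => by
    have := hz i hi
    omega

theorem beadsBelow_add_one (S : Finset (Fin e)) (z : ℤ) :
    beadsBelow S (z + 1) = beadsBelow S z + if z ∈ betaSet S then 1 else 0 := by
  rcases lt_or_ge z 0 with hz | hz
  · have hmem : z ∈ betaSet S := .inl hz
    rw [if_pos hmem, beadsBelow, beadsBelow, below_of_nonpos S hz.le,
      below_of_nonpos S (Int.add_one_le_of_lt hz)]
    omega
  · rw [beadsBelow, beadsBelow, min_eq_right hz, min_eq_right (by omega)]
    split_ifs with hmem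
    · obtain ⟨i, hi, rfl⟩ := hmem.resolve_left hz.not_gt
      rw [below_natCast_add_one hi, Finset.card_insert_of_notMem (by simp [mem_below])]
      push_cast
      ring
    · rw [below_add_one_of_forall_ne fun i hi hiz => hmem (.inr ⟨i, hi, hiz⟩), add_zero]

theorem monotone_beadsBelow (S : Finset (Fin e)) : Monotone (beadsBelow S) :=
  monotone_int_of_le_succ fun z => by
    rw [beadsBelow_add_one]
    split_ifs <;> omega

theorem beadsBelow_zero (S : Finset (Fin e)) : beadsBelow S 0 = 0 := by
  simp [beadsBelow, below_of_nonpos]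

theorem beadsBelow_natCast (S : Finset (Fin e)) : beadsBelow S e = S.card := by
  simp [beadsBelow, below_natCast]

theorem beadsBelow_le_card (S : Finset (Fin e)) (z : ℤ) : beadsBelow S z ≤ S.card := by
  have : (below S z).card ≤ S.card := Finset.card_filter_le _ _
  simp only [beadsBelow]
  omega

theorem beadsBelow_le_self (S : Finset (Fin e)) (z : ℤ) : beadsBelow S z ≤ z := by
  induction z using Int.induction_on with
  | zero => exact (beadsBelow_zero S).le
  | succ z ih =>
    rw [beadsBelow_add_one]
    split_ifs <;> omega
  | pred z ih =>
    have hmem : (-z - 1 : ℤ) ∈ betaSet S := .inl (by omega)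
    have := beadsBelow_add_one S (-z - 1)
    rw [if_pos hmem, sub_add_cancel] at this
    omega

theorem lt_of_mem_betaSet (hz : z ∈ betaSet S) : z < e := by
  obtain hz | ⟨i, -, rfl⟩ := hz <;> omega

theorem isGreatest_sSup_betaSet_inter_Iio (S : Finset (Fin e)) (b : ℤ) :
    IsGreatest (betaSet S ∩ Set.Iio b) (sSup (betaSet S ∩ Set.Iio b)) := by
  have hbdd : BddAbove (betaSet S ∩ Set.Iio b) := ⟨b, fun _ hz => hz.2.le⟩
  have hne : (betaSet S ∩ Set.Iio b).Nonempty :=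
    ⟨min b 0 - 1, .inl (by omega), by rw [Set.mem_Iio]; omega⟩
  exact ⟨Int.csSup_mem hne hbdd, fun z hz => le_csSup hbdd hz⟩

theorem beadsBelow_eq_of_isGreatest (hm : IsGreatest (betaSet S ∩ Set.Iio b) m) :
    beadsBelow S (m + 1) = beadsBelow S b := by
  suffices ∀ z, m + 1 ≤ z → z ≤ b → beadsBelow S (m + 1) = beadsBelow S z from
    this b hm.1.2 le_rfl
  intro z hz
  induction z, hz using Int.leInduction with
  | base => exact fun _ => rfl
  | succ z hz ih =>
    intro hzb
    have hgap : z ∉ betaSet S := fun hmem => (hm.2 ⟨hmem, hzb⟩).not_gt hz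
    rw [beadsBelow_add_one S z, if_neg hgap, add_zero, ih (by omega)]

theorem isGreatest_tEnum_zero (S : Finset (Fin e)) :
    IsGreatest (betaSet S ∩ Set.Iio ↑e) (tEnum (betaSet S) 0) := by
  have hS : betaSet S ∩ Set.Iio ↑e = betaSet S :=
    Set.inter_eq_left.2 fun z hz => lt_of_mem_betaSet hz
  simpa only [hS, tEnum] using isGreatest_sSup_betaSet_inter_Iio S e

theorem isGreatest_tEnum_add_one (S : Finset (Fin e)) (p : ℕ) :
    IsGreatest (betaSet S ∩ Set.Iio (tEnum (betaSet S) p)) (tEnum (betaSet S) (p + 1)) :=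
  isGreatest_sSup_betaSet_inter_Iio S _

theorem tEnum_mem (S : Finset (Fin e)) : ∀ p, tEnum (betaSet S) p ∈ betaSet S
  | 0 => (isGreatest_tEnum_zero S).1.1
  | p + 1 => (isGreatest_tEnum_add_one S p).1.1

theorem beadsBelow_tEnum_add_one (S : Finset (Fin e)) (p : ℕ) :
    beadsBelow S (tEnum (betaSet S) p + 1) = S.card - p := by
  induction p with
  | zero =>
    rw [beadsBelow_eq_of_isGreatest (isGreatest_tEnum_zero S), beadsBelow_natCast]
    simp
  | succ p ih =>
    rw [beadsBelow_add_one, if_pos (tEnum_mem S p)] at ih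
    rw [beadsBelow_eq_of_isGreatest (isGreatest_tEnum_add_one S p)]
    push_cast
    omega

theorem tEnum_lt_iff : tEnum (betaSet S) p < z ↔ S.card ≤ p + beadsBelow S z := by
  have hp := beadsBelow_tEnum_add_one S p
  refine ⟨fun hz => ?_, fun hz => ?_⟩
  · have := monotone_beadsBelow S (Int.add_one_le_of_lt hz)
    omega
  · by_contra! hle
    have := monotone_beadsBelow S hle
    rw [beadsBelow_add_one, if_pos (tEnum_mem S p)] at hp
    omega

theorem card_le_tEnum_add (S : Finset (Fin e)) (p : ℕ) :
    (S.card : ℤ) ≤ tEnum (betaSet S) p + (p + 1) := by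
  have := beadsBelow_le_self S (tEnum (betaSet S) p + 1)
  rw [beadsBelow_tEnum_add_one] at this
  omega

theorem forall_tEnum_le_iff (hcard : T.card ≤ S.card) :
    (∀ x y : ℕ, x + T.card = y + S.card → tEnum (betaSet S) x ≤ tEnum (betaSet T) y) ↔
      ∀ z, beadsBelow T z ≤ beadsBelow S z := by
  refine ⟨fun h z => ?_, fun h x y hxy => ?_⟩
  · obtain ⟨y, hy⟩ := Int.eq_ofNat_of_zero_le (sub_nonneg.2 (beadsBelow_le_card T z))
    have hyz : tEnum (betaSet T) y < z := tEnum_lt_iff.2 (by omega)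
    have hxz := (h (y + S.card - T.card) y (by omega)).trans_lt hyz
    rw [tEnum_lt_iff] at hxz
    omega
  · rw [← Int.lt_add_one_iff, tEnum_lt_iff]
    have := h (tEnum (betaSet T) y + 1)
    rw [beadsBelow_tEnum_add_one] at this
    omega

theorem below_sdiff (S T : Finset (Fin e)) (z : ℤ) : below (S \ T) z = below S z \ below T z := by
  ext
  simp only [mem_below, Finset.mem_sdiff]
  tauto

theorem beadsBelow_le_beadsBelow_iff :
    beadsBelow T z ≤ beadsBelow S z ↔ (below (T \ S) z).card ≤ (below (S \ T) z).card := by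
  rw [below_sdiff, below_sdiff, Finset.card_sdiff_le_card_sdiff_iff, beadsBelow, beadsBelow]
  omega

theorem forall_beadsBelow_le_iff (h : (T \ S).card ≤ 1) :
    (∀ z, beadsBelow T z ≤ beadsBelow S z) ↔ ∀ x ∈ T \ S, ∃ i ∈ S \ T, i < x := by
  simp only [beadsBelow_le_beadsBelow_iff]
  refine ⟨fun hle x hx => ?_, fun hlt z => ?_⟩
  · have hpos : 0 < (below (T \ S) (x + 1)).card :=
      Finset.card_pos.2 ⟨x, mem_below.2 ⟨hx, lt_add_one _⟩⟩
    obtain ⟨i, hi⟩ := Finset.card_pos.1 (hpos.trans_le (hle _))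
    obtain ⟨hiST, hix⟩ := mem_below.1 hi
    refine ⟨i, hiST, lt_of_le_of_ne (by omega) ?_⟩
    rintro rfl
    exact (Finset.mem_sdiff.1 hx).2 (Finset.mem_sdiff.1 hiST).1
  · obtain hempty | ⟨x, hx⟩ := (below (T \ S) z).eq_empty_or_nonempty
    · simp [hempty]
    · obtain ⟨hxTS, hxz⟩ := mem_below.1 hx
      obtain ⟨i, hi, hix⟩ := hlt x hxTS
      calc (below (T \ S) z).card ≤ 1 := (Finset.card_filter_le _ _).trans h
        _ ≤ (below (S \ T) z).card := Finset.card_pos.2 ⟨i, mem_below.2 ⟨hi, by omega⟩⟩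

end BetaSet

section Rows

variable {r : ℕ} {M : Fin r → Fin e → Bool}

/-- The set of columns in which row `s` of `M` has the entry `1`. -/
def row (M : Fin r → Fin e → Bool) (s : Fin r) : Finset (Fin e) := {i | M s i = true}

theorem mem_row {s : Fin r} {i : Fin e} : i ∈ row M s ↔ M s i = true := by
  simp [row]

theorem rank_zero (i : Fin e) : rank (fun _ => 0) i = i := by
  simp [rank, prec, Finset.filter_gt_eq_Iio]

theorem beads_zero (M : Fin r → Fin e → Bool) (s : Fin r) (i : Fin e) :
    beads (fun _ => 0) M s i = if i ∈ row M s then 1 else 0 := by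
  simp only [beads, rank_zero, zero_add, mem_row]

theorem nsum_zero (M : Fin r → Fin e → Bool) (s : Fin r) :
    nsum (fun _ => 0) M s = (row M s).card := by
  simp [nsum, beads_zero]

theorem tset_zero (M : Fin r → Fin e → Bool) (s : Fin r) :
    Tset (fun _ => 0) M s = betaSet (row M s) := by
  ext z
  refine or_congr_right ⟨fun ⟨hz, hmod, hdiv⟩ => ?_, fun ⟨i, hi, hiz⟩ => ?_⟩
  · rw [beads_zero] at hdiv
    split_ifs at hdiv with hmem
    · have hzero := Nat.lt_one_iff.1 hdiv
      have := Int.toNat_of_nonneg hz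
      have := Nat.div_add_mod z.toNat e
      rw [hzero] at this
      exact ⟨_, hmem, by simp only; omega⟩
    · exact absurd hdiv (Nat.not_lt_zero _)
  · obtain rfl : z = (i : ℕ) := hiz.symm
    simp [beads_zero, Nat.mod_eq_of_lt i.2, Nat.div_eq_of_lt i.2, i.2, hi]

theorem ptCharge_zero (M : Fin r → Fin e → Bool) :
    PtCharge (fun _ => 0) M = multicharge e fun s => (row M s).card := by
  funext s
  simp only [PtCharge, multicharge, nsum_zero]

theorem natCast_ptPart_zero (M : Fin r → Fin e → Bool) (s : Fin r) (p : ℕ) :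
    (PtPart (fun _ => 0) M s p : ℤ) =
      tEnum (betaSet (row M s)) p + (p + 1) - (row M s).card := by
  rw [PtPart, tset_zero, nsum_zero, Int.toNat_of_nonneg]
  exact sub_nonneg.2 (card_le_tEnum_add _ _)

theorem isBoxed_ptPart_zero (M : Fin r → Fin e → Bool) :
    IsBoxed e (fun s => (row M s).card) (PtPart (fun _ => 0) M) where
  antitone s := antitone_nat_of_succ_le fun p => by
    have := (isGreatest_tEnum_add_one (row M s) p).1.2
    have := natCast_ptPart_zero M s p
    have := natCast_ptPart_zero M s (p + 1)
    simp only [Set.mem_Iio] at *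
    omega
  zero_add_le s := by
    have := (isGreatest_tEnum_zero (row M s)).1.2
    have := natCast_ptPart_zero M s 0
    simp only [Set.mem_Iio] at *
    omega
  apply_eq_zero s := by
    have hneg : tEnum (betaSet (row M s)) (row M s).card < 0 :=
      tEnum_lt_iff.2 (by rw [beadsBelow_zero, add_zero])
    have := natCast_ptPart_zero M s (row M s).card
    omega

theorem isKleshchev_ptPart_zero_iff (hM : Antitone fun s => (row M s).card) :
    IsKleshchev (PtCharge (fun _ => 0) M) (PtPart (fun _ => 0) M) ↔
      ∀ s t, s ⋖ t → ∀ z, beadsBelow (row M t) z ≤ beadsBelow (row M s) z := by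
  rw [ptCharge_zero, isKleshchev_iff_isSemistandard hM (isBoxed_ptPart_zero M)]
  refine forall₂_congr fun s t => forall_congr' fun hst => ?_
  rw [← forall_tEnum_le_iff (hM hst.le)]
  refine forall₂_congr fun x y => forall_congr' fun hxy => ?_
  have := natCast_ptPart_zero M s x
  have := natCast_ptPart_zero M t y
  simp only at hxy
  omega

/-- Row `j + 1` of `M` is obtained from row `j` by adding the columns `gained j` and deleting the
columns `lost j`. -/
def HasRowDiffs (M : Fin (r + 1) → Fin e → Bool) (gained lost : Fin r → Finset (Fin e)) : Prop :=
  ∀ j : Fin r, row M j.succ \ row M j.castSucc = gained j ∧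
    row M j.castSucc \ row M j.succ = lost j

theorem HasRowDiffs.isKleshchev_iff {M : Fin (r + 1) → Fin e → Bool}
    {gained lost : Fin r → Finset (Fin e)} (hM : HasRowDiffs M gained lost)
    (hone : ∀ j, (gained j).card ≤ 1) (hle : ∀ j, (gained j).card ≤ (lost j).card) :
    IsKleshchev (PtCharge (fun _ => 0) M) (PtPart (fun _ => 0) M) ↔
      ∀ j, ∀ x ∈ gained j, ∃ i ∈ lost j, i < x := by
  have hanti : Antitone fun s => (row M s).card := Fin.antitone_iff_succ_le.2 fun j =>
    Finset.card_sdiff_le_card_sdiff_iff.1 (by rw [(hM j).1, (hM j).2]; exact hle j)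
  have hsucc (j : Fin r) : (∀ z, beadsBelow (row M j.succ) z ≤ beadsBelow (row M j.castSucc) z) ↔
      ∀ x ∈ gained j, ∃ i ∈ lost j, i < x := by
    rw [forall_beadsBelow_le_iff (by rw [(hM j).1]; exact hone j), (hM j).1, (hM j).2]
  rw [isKleshchev_ptPart_zero_iff hanti]
  simp only [← hsucc]
  refine ⟨fun h j => h _ _ (by simp [Fin.covBy_iff]), fun h s t hst => ?_⟩
  obtain ⟨j, rfl, rfl⟩ : ∃ j : Fin r, j.castSucc = s ∧ j.succ = t := by
    rw [Fin.covBy_iff, Nat.covBy_iff_add_one_eq] at hst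
    exact ⟨⟨s, by omega⟩, Fin.ext rfl, Fin.ext hst⟩
  exact h j

end Rows

section OrderEmb

variable {α : Type*} [LinearOrder α] {Y : Finset α} {k : ℕ}

theorem exists_mem_lt_iff (hY : Y.card = k) (hk : 0 < k) (x : α) :
    (∃ i ∈ Y, i < x) ↔ Y.orderEmbOfFin hY ⟨0, hk⟩ < x := by
  rw [Finset.orderEmbOfFin_zero hY hk]
  exact ⟨fun ⟨i, hi, hix⟩ => (Finset.min'_le _ _ hi).trans_lt hix,
    fun hx => ⟨_, Finset.min'_mem _ _, hx⟩⟩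

theorem orderEmbOfFin_zero_lt_iff (hY : Y.card = k) (hk : 0 < k) (f : Fin k) :
    Y.orderEmbOfFin hY ⟨0, hk⟩ < Y.orderEmbOfFin hY f ↔ f ≠ ⟨0, hk⟩ := by
  rw [OrderEmbedding.lt_iff_lt, Fin.lt_def, Ne, Fin.ext_iff, Nat.pos_iff_ne_zero]

theorem exists_mem_erase_lt_iff (x : α) : (∃ i ∈ Y.erase x, i < x) ↔ ∃ i ∈ Y, i < x :=
  exists_congr fun _ => and_congr_left fun hi => by simp [hi.ne]

end OrderEmb

section Family

theorem hasRowDiffs_of_forall_col {M : Fin 4 → Fin e → Bool}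
    {N₀ N₁ N₂ P₀ P₁ P₂ : Finset (Fin e)}
    (h : ∀ c, ((M 1 c = true ∧ M 0 c = false ↔ c ∈ N₀) ∧ (M 0 c = true ∧ M 1 c = false ↔ c ∈ P₀)) ∧
      ((M 2 c = true ∧ M 1 c = false ↔ c ∈ N₁) ∧ (M 1 c = true ∧ M 2 c = false ↔ c ∈ P₁)) ∧
      ((M 3 c = true ∧ M 2 c = false ↔ c ∈ N₂) ∧ (M 2 c = true ∧ M 3 c = false ↔ c ∈ P₂))) :
    HasRowDiffs M ![N₀, N₁, N₂] ![P₀, P₁, P₂] := by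
  simp only [forall_and] at h
  obtain ⟨⟨hN₀, hP₀⟩, ⟨hN₁, hP₁⟩, hN₂, hP₂⟩ := h
  intro j
  fin_cases j <;> simp [Finset.ext_iff, mem_row, *]

variable {Y1 Y2 Y3 : Finset (Fin e)} {y1 y2 y3 : ℕ}
variable (h1 : Y1.card = y1) (h2 : Y2.card = y2) (h3 : Y3.card = y3)
variable (h12 : Disjoint Y1 Y2) (h13 : Disjoint Y1 Y3) (h23 : Disjoint Y2 Y3)

section RowDiffs

include h12 h13 h23

theorem hasRowDiffs_alpha1 (f : Fin y1) :
    HasRowDiffs (alpha1 Y1 Y2 Y3 h1 f)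
      ![∅, ∅, {Y1.orderEmbOfFin h1 f}]
      ![Y1.erase (Y1.orderEmbOfFin h1 f), Y2, Y3] := by
  have hi := Y1.orderEmbOfFin_mem h1 f
  rw [Finset.disjoint_left] at h12 h13 h23
  refine hasRowDiffs_of_forall_col fun c => ?_
  simp only [alpha1, over1, base4, Matrix.cons_val]
  grind

theorem hasRowDiffs_alpha2 (g : Fin y2) :
    HasRowDiffs (alpha2 Y1 Y2 Y3 h2 g)
      ![{Y2.orderEmbOfFin h2 g}, ∅, {Y2.orderEmbOfFin h2 g}]
      ![Y1, Y2, Y3] := by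
  have hj := Y2.orderEmbOfFin_mem h2 g
  rw [Finset.disjoint_left] at h12 h13 h23
  refine hasRowDiffs_of_forall_col fun c => ?_
  simp only [alpha2, over1, base4, Matrix.cons_val]
  grind

theorem hasRowDiffs_alpha3 (h : Fin y3) :
    HasRowDiffs (alpha3 Y1 Y2 Y3 h3 h)
      ![{Y3.orderEmbOfFin h3 h}, ∅, ∅]
      ![Y1, Y2, Y3.erase (Y3.orderEmbOfFin h3 h)] := by
  have hk := Y3.orderEmbOfFin_mem h3 h
  rw [Finset.disjoint_left] at h12 h13 h23
  refine hasRowDiffs_of_forall_col fun c => ?_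
  simp only [alpha3, over1, base4, Matrix.cons_val]
  grind

theorem hasRowDiffs_beta12 (f : Fin y1) (g : Fin y2) :
    HasRowDiffs (beta12 Y1 Y2 Y3 h1 h2 f g)
      ![{Y1.orderEmbOfFin h1 f}, ∅, {Y2.orderEmbOfFin h2 g}]
      ![insert (Y2.orderEmbOfFin h2 g) (Y1.erase (Y1.orderEmbOfFin h1 f)),
        insert (Y1.orderEmbOfFin h1 f) (Y2.erase (Y2.orderEmbOfFin h2 g)),
        Y3] := by
  have hi := Y1.orderEmbOfFin_mem h1 f
  have hj := Y2.orderEmbOfFin_mem h2 g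
  rw [Finset.disjoint_left] at h12 h13 h23
  refine hasRowDiffs_of_forall_col fun c => ?_
  simp only [beta12, over1, base4, Matrix.cons_val]
  grind

theorem hasRowDiffs_beta13 (f : Fin y1) (h : Fin y3) :
    HasRowDiffs (beta13 Y1 Y2 Y3 h1 h3 f h)
      ![∅, {Y1.orderEmbOfFin h1 f}, {Y3.orderEmbOfFin h3 h}]
      ![Y1.erase (Y1.orderEmbOfFin h1 f),
        insert (Y3.orderEmbOfFin h3 h) Y2,
        insert (Y1.orderEmbOfFin h1 f) (Y3.erase (Y3.orderEmbOfFin h3 h))] := by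
  have hi := Y1.orderEmbOfFin_mem h1 f
  have hk := Y3.orderEmbOfFin_mem h3 h
  rw [Finset.disjoint_left] at h12 h13 h23
  refine hasRowDiffs_of_forall_col fun c => ?_
  simp only [beta13, over1, base4, Matrix.cons_val]
  grind

theorem hasRowDiffs_beta13bar (f : Fin y1) (h : Fin y3) :
    HasRowDiffs (beta13bar Y1 Y2 Y3 h1 h3 f h)
      ![{Y1.orderEmbOfFin h1 f}, {Y3.orderEmbOfFin h3 h}, ∅]
      ![insert (Y3.orderEmbOfFin h3 h) (Y1.erase (Y1.orderEmbOfFin h1 f)),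
        insert (Y1.orderEmbOfFin h1 f) Y2,
        Y3.erase (Y3.orderEmbOfFin h3 h)] := by
  have hi := Y1.orderEmbOfFin_mem h1 f
  have hk := Y3.orderEmbOfFin_mem h3 h
  rw [Finset.disjoint_left] at h12 h13 h23
  refine hasRowDiffs_of_forall_col fun c => ?_
  simp only [beta13bar, over1, base4, Matrix.cons_val]
  grind

theorem hasRowDiffs_beta23 (g : Fin y2) (h : Fin y3) :
    HasRowDiffs (beta23 Y1 Y2 Y3 h2 h3 g h)
      ![{Y2.orderEmbOfFin h2 g}, ∅, {Y3.orderEmbOfFin h3 h}]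
      ![Y1,
        insert (Y3.orderEmbOfFin h3 h) (Y2.erase (Y2.orderEmbOfFin h2 g)),
        insert (Y2.orderEmbOfFin h2 g) (Y3.erase (Y3.orderEmbOfFin h3 h))] := by
  have hj := Y2.orderEmbOfFin_mem h2 g
  have hk := Y3.orderEmbOfFin_mem h3 h
  rw [Finset.disjoint_left] at h12 h13 h23
  refine hasRowDiffs_of_forall_col fun c => ?_
  simp only [beta23, over1, base4, Matrix.cons_val]
  grind

theorem hasRowDiffs_gamma123 (f : Fin y1) (g : Fin y2) (h : Fin y3) :
    HasRowDiffs (gamma123 Y1 Y2 Y3 h1 h2 h3 f g h)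
      ![{Y1.orderEmbOfFin h1 f}, {Y2.orderEmbOfFin h2 g}, {Y3.orderEmbOfFin h3 h}]
      ![insert (Y2.orderEmbOfFin h2 g) (Y1.erase (Y1.orderEmbOfFin h1 f)),
        insert (Y1.orderEmbOfFin h1 f)
          (insert (Y3.orderEmbOfFin h3 h) (Y2.erase (Y2.orderEmbOfFin h2 g))),
        insert (Y2.orderEmbOfFin h2 g) (Y3.erase (Y3.orderEmbOfFin h3 h))] := by
  have hi := Y1.orderEmbOfFin_mem h1 f
  have hj := Y2.orderEmbOfFin_mem h2 g
  have hk := Y3.orderEmbOfFin_mem h3 h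
  rw [Finset.disjoint_left] at h12 h13 h23
  refine hasRowDiffs_of_forall_col fun c => ?_
  simp only [gamma123, over1, base4, Matrix.cons_val]
  grind

end RowDiffs

variable (hy1 : 0 < y1) (hy2 : 0 < y2) (hy3 : 0 < y3)

include h12 h13 h23

theorem isKleshchev_alpha1_iff (f : Fin y1) :
    IsKleshchev (PtCharge (fun _ => 0) (alpha1 Y1 Y2 Y3 h1 f))
        (PtPart (fun _ => 0) (alpha1 Y1 Y2 Y3 h1 f)) ↔
      Y3.orderEmbOfFin h3 ⟨0, hy3⟩ < Y1.orderEmbOfFin h1 f := by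
  have hY3 : Y3.Nonempty := Finset.card_pos.1 (h3 ▸ hy3)
  rw [(hasRowDiffs_alpha1 h1 h12 h13 h23 f).isKleshchev_iff
    (by simp [Fin.forall_fin_succ]) (by simp [Fin.forall_fin_succ, hY3])]
  simp only [Fin.forall_fin_succ, Matrix.cons_val_zero, Matrix.cons_val_succ,
    Matrix.cons_val_fin_one, Finset.notMem_empty, Finset.mem_singleton, forall_eq,
    IsEmpty.forall_iff, implies_true, true_and, and_true, exists_mem_lt_iff h3 hy3]

theorem isKleshchev_alpha2_iff (g : Fin y2) :
    IsKleshchev (PtCharge (fun _ => 0) (alpha2 Y1 Y2 Y3 h2 g))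
        (PtPart (fun _ => 0) (alpha2 Y1 Y2 Y3 h2 g)) ↔
      Y1.orderEmbOfFin h1 ⟨0, hy1⟩ < Y2.orderEmbOfFin h2 g ∧
      Y3.orderEmbOfFin h3 ⟨0, hy3⟩ < Y2.orderEmbOfFin h2 g := by
  have hY1 : Y1.Nonempty := Finset.card_pos.1 (h1 ▸ hy1)
  have hY3 : Y3.Nonempty := Finset.card_pos.1 (h3 ▸ hy3)
  rw [(hasRowDiffs_alpha2 h2 h12 h13 h23 g).isKleshchev_iff
    (by simp [Fin.forall_fin_succ]) (by simp [Fin.forall_fin_succ, hY1, hY3])]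
  simp only [Fin.forall_fin_succ, Matrix.cons_val_zero, Matrix.cons_val_succ,
    Matrix.cons_val_fin_one, Finset.notMem_empty, Finset.mem_singleton, forall_eq,
    IsEmpty.forall_iff, implies_true, true_and, and_true, exists_mem_lt_iff h1 hy1,
    exists_mem_lt_iff h3 hy3]

theorem isKleshchev_alpha3_iff (h : Fin y3) :
    IsKleshchev (PtCharge (fun _ => 0) (alpha3 Y1 Y2 Y3 h3 h))
        (PtPart (fun _ => 0) (alpha3 Y1 Y2 Y3 h3 h)) ↔
      Y1.orderEmbOfFin h1 ⟨0, hy1⟩ < Y3.orderEmbOfFin h3 h := by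
  have hY1 : Y1.Nonempty := Finset.card_pos.1 (h1 ▸ hy1)
  rw [(hasRowDiffs_alpha3 h3 h12 h13 h23 h).isKleshchev_iff
    (by simp [Fin.forall_fin_succ]) (by simp [Fin.forall_fin_succ, hY1])]
  simp only [Fin.forall_fin_succ, Matrix.cons_val_zero, Matrix.cons_val_succ,
    Matrix.cons_val_fin_one, Finset.notMem_empty, Finset.mem_singleton, forall_eq,
    IsEmpty.forall_iff, implies_true, and_true, exists_mem_lt_iff h1 hy1]

theorem isKleshchev_beta12_iff (f : Fin y1) (g : Fin y2) :
    IsKleshchev (PtCharge (fun _ => 0) (beta12 Y1 Y2 Y3 h1 h2 f g))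
        (PtPart (fun _ => 0) (beta12 Y1 Y2 Y3 h1 h2 f g)) ↔
      (Y3.orderEmbOfFin h3 ⟨0, hy3⟩ < Y2.orderEmbOfFin h2 g ∧
        Y2.orderEmbOfFin h2 g < Y1.orderEmbOfFin h1 f) ∨
      (Y3.orderEmbOfFin h3 ⟨0, hy3⟩ < Y2.orderEmbOfFin h2 g ∧
        Y1.orderEmbOfFin h1 f < Y2.orderEmbOfFin h2 g ∧ f ≠ ⟨0, hy1⟩) := by
  have hY3 : Y3.Nonempty := Finset.card_pos.1 (h3 ▸ hy3)
  rw [(hasRowDiffs_beta12 h1 h2 h12 h13 h23 f g).isKleshchev_iff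
    (by simp [Fin.forall_fin_succ]) (by simp [Fin.forall_fin_succ, hY3])]
  simp only [Fin.forall_fin_succ, Matrix.cons_val_zero, Matrix.cons_val_succ,
    Matrix.cons_val_fin_one, Finset.notMem_empty, Finset.mem_singleton, forall_eq,
    IsEmpty.forall_iff, implies_true, true_and, and_true, Finset.exists_mem_insert,
    exists_mem_erase_lt_iff, exists_mem_lt_iff h1 hy1, exists_mem_lt_iff h3 hy3,
    orderEmbOfFin_zero_lt_iff]
  have hij : Y1.orderEmbOfFin h1 f ≠ Y2.orderEmbOfFin h2 g :=
    h12.forall_ne_finset (Y1.orderEmbOfFin_mem h1 f) (Y2.orderEmbOfFin_mem h2 g)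
  grind

theorem isKleshchev_beta13_iff (f : Fin y1) (h : Fin y3) :
    IsKleshchev (PtCharge (fun _ => 0) (beta13 Y1 Y2 Y3 h1 h3 f h))
        (PtPart (fun _ => 0) (beta13 Y1 Y2 Y3 h1 h3 f h)) ↔
      (Y2.orderEmbOfFin h2 ⟨0, hy2⟩ < Y1.orderEmbOfFin h1 f ∧
        Y1.orderEmbOfFin h1 f < Y3.orderEmbOfFin h3 h) ∨
      (Y3.orderEmbOfFin h3 h < Y1.orderEmbOfFin h1 f ∧ h ≠ ⟨0, hy3⟩) := by
  rw [(hasRowDiffs_beta13 h1 h3 h12 h13 h23 f h).isKleshchev_iff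
    (by simp [Fin.forall_fin_succ]) (by simp [Fin.forall_fin_succ])]
  simp only [Fin.forall_fin_succ, Matrix.cons_val_zero, Matrix.cons_val_succ,
    Matrix.cons_val_fin_one, Finset.notMem_empty, Finset.mem_singleton, forall_eq,
    IsEmpty.forall_iff, implies_true, true_and, and_true, Finset.exists_mem_insert,
    exists_mem_erase_lt_iff, exists_mem_lt_iff h2 hy2, exists_mem_lt_iff h3 hy3,
    orderEmbOfFin_zero_lt_iff]
  have hik : Y1.orderEmbOfFin h1 f ≠ Y3.orderEmbOfFin h3 h :=
    h13.forall_ne_finset (Y1.orderEmbOfFin_mem h1 f) (Y3.orderEmbOfFin_mem h3 h)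
  grind

theorem isKleshchev_beta13bar_iff (f : Fin y1) (h : Fin y3) :
    IsKleshchev (PtCharge (fun _ => 0) (beta13bar Y1 Y2 Y3 h1 h3 f h))
        (PtPart (fun _ => 0) (beta13bar Y1 Y2 Y3 h1 h3 f h)) ↔
      (Y2.orderEmbOfFin h2 ⟨0, hy2⟩ < Y3.orderEmbOfFin h3 h ∧
        Y3.orderEmbOfFin h3 h < Y1.orderEmbOfFin h1 f) ∨
      (Y1.orderEmbOfFin h1 f < Y3.orderEmbOfFin h3 h ∧ f ≠ ⟨0, hy1⟩) := by
  rw [(hasRowDiffs_beta13bar h1 h3 h12 h13 h23 f h).isKleshchev_iff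
    (by simp [Fin.forall_fin_succ]) (by simp [Fin.forall_fin_succ])]
  simp only [Fin.forall_fin_succ, Matrix.cons_val_zero, Matrix.cons_val_succ,
    Matrix.cons_val_fin_one, Finset.notMem_empty, Finset.mem_singleton, forall_eq,
    IsEmpty.forall_iff, implies_true, and_true, Finset.exists_mem_insert, exists_mem_erase_lt_iff,
    exists_mem_lt_iff h1 hy1, exists_mem_lt_iff h2 hy2, orderEmbOfFin_zero_lt_iff]
  have hik : Y1.orderEmbOfFin h1 f ≠ Y3.orderEmbOfFin h3 h :=
    h13.forall_ne_finset (Y1.orderEmbOfFin_mem h1 f) (Y3.orderEmbOfFin_mem h3 h)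
  grind

theorem isKleshchev_beta23_iff (g : Fin y2) (h : Fin y3) :
    IsKleshchev (PtCharge (fun _ => 0) (beta23 Y1 Y2 Y3 h2 h3 g h))
        (PtPart (fun _ => 0) (beta23 Y1 Y2 Y3 h2 h3 g h)) ↔
      (Y1.orderEmbOfFin h1 ⟨0, hy1⟩ < Y2.orderEmbOfFin h2 g ∧
        Y2.orderEmbOfFin h2 g < Y3.orderEmbOfFin h3 h) ∨
      (Y1.orderEmbOfFin h1 ⟨0, hy1⟩ < Y2.orderEmbOfFin h2 g ∧
        Y3.orderEmbOfFin h3 h < Y2.orderEmbOfFin h2 g ∧ h ≠ ⟨0, hy3⟩) := by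
  have hY1 : Y1.Nonempty := Finset.card_pos.1 (h1 ▸ hy1)
  rw [(hasRowDiffs_beta23 h2 h3 h12 h13 h23 g h).isKleshchev_iff
    (by simp [Fin.forall_fin_succ]) (by simp [Fin.forall_fin_succ, hY1])]
  simp only [Fin.forall_fin_succ, Matrix.cons_val_zero, Matrix.cons_val_succ,
    Matrix.cons_val_fin_one, Finset.notMem_empty, Finset.mem_singleton, forall_eq,
    IsEmpty.forall_iff, implies_true, true_and, and_true, Finset.exists_mem_insert,
    exists_mem_erase_lt_iff, exists_mem_lt_iff h1 hy1, exists_mem_lt_iff h3 hy3,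
    orderEmbOfFin_zero_lt_iff]
  have hjk : Y2.orderEmbOfFin h2 g ≠ Y3.orderEmbOfFin h3 h :=
    h23.forall_ne_finset (Y2.orderEmbOfFin_mem h2 g) (Y3.orderEmbOfFin_mem h3 h)
  grind

theorem isKleshchev_gamma123_iff (f : Fin y1) (g : Fin y2) (h : Fin y3) :
    IsKleshchev (PtCharge (fun _ => 0) (gamma123 Y1 Y2 Y3 h1 h2 h3 f g h))
        (PtPart (fun _ => 0) (gamma123 Y1 Y2 Y3 h1 h2 h3 f g h)) ↔
      (Y2.orderEmbOfFin h2 g < Y1.orderEmbOfFin h1 f ∧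
        Y2.orderEmbOfFin h2 g < Y3.orderEmbOfFin h3 h ∧ g ≠ ⟨0, hy2⟩) ∨
      (Y1.orderEmbOfFin h1 f < Y2.orderEmbOfFin h2 g ∧
        Y2.orderEmbOfFin h2 g < Y3.orderEmbOfFin h3 h ∧ f ≠ ⟨0, hy1⟩) ∨
      (Y3.orderEmbOfFin h3 h < Y2.orderEmbOfFin h2 g ∧
        Y2.orderEmbOfFin h2 g < Y1.orderEmbOfFin h1 f ∧ h ≠ ⟨0, hy3⟩) ∨
      (Y1.orderEmbOfFin h1 f < Y2.orderEmbOfFin h2 g ∧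
        Y3.orderEmbOfFin h3 h < Y2.orderEmbOfFin h2 g ∧
        f ≠ ⟨0, hy1⟩ ∧ h ≠ ⟨0, hy3⟩) := by
  rw [(hasRowDiffs_gamma123 h1 h2 h3 h12 h13 h23 f g h).isKleshchev_iff
    (by simp [Fin.forall_fin_succ]) (by simp [Fin.forall_fin_succ])]
  simp only [Fin.forall_fin_succ, Matrix.cons_val_zero, Matrix.cons_val_succ,
    Matrix.cons_val_fin_one, Finset.mem_singleton, forall_eq, IsEmpty.forall_iff, and_true,
    Finset.exists_mem_insert, exists_mem_erase_lt_iff, exists_mem_lt_iff h1 hy1,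
    exists_mem_lt_iff h2 hy2, exists_mem_lt_iff h3 hy3, orderEmbOfFin_zero_lt_iff]
  have hij : Y1.orderEmbOfFin h1 f ≠ Y2.orderEmbOfFin h2 g :=
    h12.forall_ne_finset (Y1.orderEmbOfFin_mem h1 f) (Y2.orderEmbOfFin_mem h2 g)
  have hjk : Y2.orderEmbOfFin h2 g ≠ Y3.orderEmbOfFin h3 h :=
    h23.forall_ne_finset (Y2.orderEmbOfFin_mem h2 g) (Y3.orderEmbOfFin_mem h3 h)
  grind

end Family

/-- Classification of the Kleshchev multipartitions in the
`r = 4` family. -/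
theorem r4_kleshchev_classification (e : ℕ) (he : 2 ≤ e)
    (Y1 Y2 Y3 : Finset (Fin e)) {y1 y2 y3 : ℕ}
    (h1 : Y1.card = y1) (h2 : Y2.card = y2) (h3 : Y3.card = y3)
    (hy1 : 0 < y1) (hy2 : 0 < y2) (hy3 : 0 < y3)
    (h12 : Disjoint Y1 Y2) (h13 : Disjoint Y1 Y3) (h23 : Disjoint Y2 Y3) :
    (∀ f : Fin y1,
      IsKleshchev (PtCharge (fun _ => 0) (alpha1 Y1 Y2 Y3 h1 f))
          (PtPart (fun _ => 0) (alpha1 Y1 Y2 Y3 h1 f)) ↔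
        Y3.orderEmbOfFin h3 ⟨0, hy3⟩ < Y1.orderEmbOfFin h1 f) ∧
    (∀ g : Fin y2,
      IsKleshchev (PtCharge (fun _ => 0) (alpha2 Y1 Y2 Y3 h2 g))
          (PtPart (fun _ => 0) (alpha2 Y1 Y2 Y3 h2 g)) ↔
        Y1.orderEmbOfFin h1 ⟨0, hy1⟩ < Y2.orderEmbOfFin h2 g ∧
        Y3.orderEmbOfFin h3 ⟨0, hy3⟩ < Y2.orderEmbOfFin h2 g) ∧
    (∀ h : Fin y3,
      IsKleshchev (PtCharge (fun _ => 0) (alpha3 Y1 Y2 Y3 h3 h))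
          (PtPart (fun _ => 0) (alpha3 Y1 Y2 Y3 h3 h)) ↔
        Y1.orderEmbOfFin h1 ⟨0, hy1⟩ < Y3.orderEmbOfFin h3 h) ∧
    (∀ (f : Fin y1) (g : Fin y2),
      IsKleshchev (PtCharge (fun _ => 0) (beta12 Y1 Y2 Y3 h1 h2 f g))
          (PtPart (fun _ => 0) (beta12 Y1 Y2 Y3 h1 h2 f g)) ↔
        (Y3.orderEmbOfFin h3 ⟨0, hy3⟩ < Y2.orderEmbOfFin h2 g ∧
          Y2.orderEmbOfFin h2 g < Y1.orderEmbOfFin h1 f) ∨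
        (Y3.orderEmbOfFin h3 ⟨0, hy3⟩ < Y2.orderEmbOfFin h2 g ∧
          Y1.orderEmbOfFin h1 f < Y2.orderEmbOfFin h2 g ∧ f ≠ ⟨0, hy1⟩)) ∧
    (∀ (f : Fin y1) (h : Fin y3),
      IsKleshchev (PtCharge (fun _ => 0) (beta13 Y1 Y2 Y3 h1 h3 f h))
          (PtPart (fun _ => 0) (beta13 Y1 Y2 Y3 h1 h3 f h)) ↔
        (Y2.orderEmbOfFin h2 ⟨0, hy2⟩ < Y1.orderEmbOfFin h1 f ∧
          Y1.orderEmbOfFin h1 f < Y3.orderEmbOfFin h3 h) ∨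
        (Y3.orderEmbOfFin h3 h < Y1.orderEmbOfFin h1 f ∧ h ≠ ⟨0, hy3⟩)) ∧
    (∀ (f : Fin y1) (h : Fin y3),
      IsKleshchev (PtCharge (fun _ => 0) (beta13bar Y1 Y2 Y3 h1 h3 f h))
          (PtPart (fun _ => 0) (beta13bar Y1 Y2 Y3 h1 h3 f h)) ↔
        (Y2.orderEmbOfFin h2 ⟨0, hy2⟩ < Y3.orderEmbOfFin h3 h ∧
          Y3.orderEmbOfFin h3 h < Y1.orderEmbOfFin h1 f) ∨
        (Y1.orderEmbOfFin h1 f < Y3.orderEmbOfFin h3 h ∧ f ≠ ⟨0, hy1⟩)) ∧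
    (∀ (g : Fin y2) (h : Fin y3),
      IsKleshchev (PtCharge (fun _ => 0) (beta23 Y1 Y2 Y3 h2 h3 g h))
          (PtPart (fun _ => 0) (beta23 Y1 Y2 Y3 h2 h3 g h)) ↔
        (Y1.orderEmbOfFin h1 ⟨0, hy1⟩ < Y2.orderEmbOfFin h2 g ∧
          Y2.orderEmbOfFin h2 g < Y3.orderEmbOfFin h3 h) ∨
        (Y1.orderEmbOfFin h1 ⟨0, hy1⟩ < Y2.orderEmbOfFin h2 g ∧
          Y3.orderEmbOfFin h3 h < Y2.orderEmbOfFin h2 g ∧ h ≠ ⟨0, hy3⟩)) ∧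
    (∀ (f : Fin y1) (g : Fin y2) (h : Fin y3),
      IsKleshchev (PtCharge (fun _ => 0) (gamma123 Y1 Y2 Y3 h1 h2 h3 f g h))
          (PtPart (fun _ => 0) (gamma123 Y1 Y2 Y3 h1 h2 h3 f g h)) ↔
        (Y2.orderEmbOfFin h2 g < Y1.orderEmbOfFin h1 f ∧
          Y2.orderEmbOfFin h2 g < Y3.orderEmbOfFin h3 h ∧ g ≠ ⟨0, hy2⟩) ∨
        (Y1.orderEmbOfFin h1 f < Y2.orderEmbOfFin h2 g ∧
          Y2.orderEmbOfFin h2 g < Y3.orderEmbOfFin h3 h ∧ f ≠ ⟨0, hy1⟩) ∨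
        (Y3.orderEmbOfFin h3 h < Y2.orderEmbOfFin h2 g ∧
          Y2.orderEmbOfFin h2 g < Y1.orderEmbOfFin h1 f ∧ h ≠ ⟨0, hy3⟩) ∨
        (Y1.orderEmbOfFin h1 f < Y2.orderEmbOfFin h2 g ∧
          Y3.orderEmbOfFin h3 h < Y2.orderEmbOfFin h2 g ∧
          f ≠ ⟨0, hy1⟩ ∧ h ≠ ⟨0, hy3⟩)) :=
  ⟨isKleshchev_alpha1_iff h1 h3 h12 h13 h23 hy3,
    isKleshchev_alpha2_iff h1 h2 h3 h12 h13 h23 hy1 hy3,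
    isKleshchev_alpha3_iff h1 h3 h12 h13 h23 hy1,
    isKleshchev_beta12_iff h1 h2 h3 h12 h13 h23 hy1 hy3,
    isKleshchev_beta13_iff h1 h2 h3 h12 h13 h23 hy2 hy3,
    isKleshchev_beta13bar_iff h1 h2 h3 h12 h13 h23 hy1 hy2,
    isKleshchev_beta23_iff h1 h2 h3 h12 h13 h23 hy1 hy3,
    isKleshchev_gamma123_iff h1 h2 h3 h12 h13 h23 hy1 hy2 hy3⟩

end
end AK
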